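/- arXiv:2307.09663 — 3 statements merged into one kernel-verified Lean document; each statement's English description precedes it below -/
import Mathlib

section
/- Let G be a simple graph on n vertices with a clique partition F and largest clique-degree t_1^F. Then the smallest adjacency eigenvalue satisfies λ_n(G) ≥ −t_1^F. Moreover, if λ_n(G) = −t_1^F then rank(M_F) < n; and conversely, if rank(M_F) < n and G is clique-regular with respect to F (all clique-degrees equal), then λ_n(G) = −t_1^F. -/
/-!
The identity behind the theorem is `M Mᵀ = A + D`, where `M` is the vertex-clique incidence matrix,
`A` the adjacency matrix and `D` the diagonal matrix of clique-degrees: two distinct vertices share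
one clique if they are adjacent and none otherwise (`vcMat_mul_transpose`).

If `v ≠ 0` is an eigenvector of `A` for the least eigenvalue `μ` and `t` bounds the clique-degrees,
then `0 ≤ ‖Mᵀ v‖² = μ ‖v‖² + ∑ dᵢ vᵢ² ≤ (μ + t) ‖v‖²`. Hence `μ ≥ -t`, and `μ = -t` forces
`Mᵀ v = 0`, so `M` has dependent rows. Conversely, if the rows of `M` are dependent, some `v ≠ 0`
has `Mᵀ v = 0`; when `D = t I` this says `A v = -t v`, so `-t` is an eigenvalue and `μ ≤ -t`.
-/

open Matrix Finset

/-- A clique partition of `G`: each member is a clique and every edge of `G`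
lies in exactly one member. -/
def IsCliquePartition {n k : ℕ} (G : SimpleGraph (Fin n)) (F : Fin k → Finset (Fin n)) : Prop :=
  (∀ j, G.IsClique ↑(F j)) ∧ ∀ ⦃u v : Fin n⦄, G.Adj u v → ∃! j, u ∈ F j ∧ v ∈ F j

/-- The vertex-clique incidence matrix of the family `F`. -/
def vcMat {n k : ℕ} (F : Fin k → Finset (Fin n)) : Matrix (Fin n) (Fin k) ℝ :=
  fun i j => if i ∈ F j then 1 else 0

/-- The clique-degree of vertex `i`: the number of members of `F` containing `i`. -/
def cliqueDeg {n k : ℕ} (F : Fin k → Finset (Fin n)) (i : Fin n) : ℕ :=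
  (Finset.univ.filter fun j => i ∈ F j).card

/-- The adjacency matrix of the clique partition graph `P_G`:
two distinct members of `F` are adjacent iff they share a vertex. -/
def pgMat {n k : ℕ} (F : Fin k → Finset (Fin n)) : Matrix (Fin k) (Fin k) ℝ :=
  fun j l => if j ≠ l ∧ (F j ∩ F l).Nonempty then 1 else 0

/-- The `i`-th largest eigenvalue (0-based) of a real symmetric matrix. -/
noncomputable def eigsDesc {N : ℕ} (A : Matrix (Fin N) (Fin N) ℝ) : Fin N → ℝ :=
  fun i => if hA : A.IsHermitian then (hA.eigenvalues ∘ Tuple.sort hA.eigenvalues) i.rev else 0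

/-- The number of negative eigenvalues (with multiplicity) of a real symmetric matrix. -/
noncomputable def negInertia {m : Type*} [Fintype m] [DecidableEq m] (A : Matrix m m ℝ) : ℕ :=
  if hA : A.IsHermitian then (Finset.univ.filter fun i => hA.eigenvalues i < 0).card else 0

/-- The number of positive eigenvalues (with multiplicity) of a real symmetric matrix. -/
noncomputable def posInertia {m : Type*} [Fintype m] [DecidableEq m] (A : Matrix m m ℝ) : ℕ :=
  if hA : A.IsHermitian then (Finset.univ.filter fun i => 0 < hA.eigenvalues i).card else 0

/-- The `i`-th largest value (0-based) of a tuple of naturals. -/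
noncomputable def sortedDesc {N : ℕ} (f : Fin N → ℕ) : Fin N → ℕ :=
  fun i => (f ∘ Tuple.sort f) i.rev

theorem vcMat_mul_transpose {n k : ℕ} (G : SimpleGraph (Fin n)) [DecidableRel G.Adj]
    (F : Fin k → Finset (Fin n)) (hF : IsCliquePartition G F) :
    vcMat F * (vcMat F)ᵀ = G.adjMatrix ℝ + diagonal (fun i => (cliqueDeg F i : ℝ)) := by
  ext u v
  have key : (vcMat F * (vcMat F)ᵀ) u v
      = ((Finset.univ.filter fun j => u ∈ F j ∧ v ∈ F j).card : ℝ) := by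
    simp [Matrix.mul_apply, vcMat, ← ite_and, Finset.sum_boole]
    simp [and_comm]
  rw [key]
  by_cases huv : u = v
  · subst huv
    simp [cliqueDeg]
  · by_cases hadj : G.Adj u v
    · obtain ⟨j, hj, hu⟩ := hF.2 hadj
      have : (Finset.univ.filter fun j => u ∈ F j ∧ v ∈ F j) = {j} := by
        ext l
        simp only [Finset.mem_filter, Finset.mem_univ, true_and, Finset.mem_singleton]
        exact ⟨hu l, fun h => h ▸ hj⟩
      simp [this, huv, hadj]
    · have : (Finset.univ.filter fun j => u ∈ F j ∧ v ∈ F j) = ∅ := by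
        rw [Finset.filter_eq_empty_iff]
        rintro l - ⟨h1, h2⟩
        exact hadj (hF.1 l h1 h2 huv)
      simp [this, huv, hadj]

theorem rank_lt_iff_exists_vecMul {n k : ℕ} (M : Matrix (Fin n) (Fin k) ℝ) :
    M.rank < n ↔ ∃ v, v ≠ 0 ∧ v ᵥ* M = 0 := by
  have h1 : M.rank = n ↔ LinearIndependent ℝ M.row := by
    rw [linearIndependent_iff_card_eq_finrank_span, Matrix.rank_eq_finrank_span_row,
      Fintype.card_fin]
    exact eq_comm
  have h2 : M.rank ≤ n := by simpa using M.rank_le_card_height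
  rw [h2.lt_iff_ne, Ne, h1, ← Matrix.vecMul_injective_iff, ← Matrix.coe_vecMulLinear,
    injective_iff_map_eq_zero]
  push Not
  simp [and_comm]

/-- The last entry of `eigsDesc` is attained by an eigenvector and is a lower bound for the real
numbers that have an eigenvector. -/
theorem eigsDesc_last_spec {n : ℕ} (hn : 0 < n) (h_lt : n - 1 < n)
    (A : Matrix (Fin n) (Fin n) ℝ) (hA : A.IsHermitian) :
    (∃ v, v ≠ 0 ∧ A *ᵥ v = eigsDesc A ⟨n - 1, h_lt⟩ • v) ∧
    ∀ (c : ℝ) (v : Fin n → ℝ), v ≠ 0 → A *ᵥ v = c • v → eigsDesc A ⟨n - 1, h_lt⟩ ≤ c := by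
  have hr : (⟨n - 1, h_lt⟩ : Fin n).rev = ⟨0, hn⟩ := by
    ext
    simp [Fin.rev]
    omega
  simp only [eigsDesc, dif_pos hA, hr]
  refine ⟨⟨_, ?_, hA.mulVec_eigenvectorBasis _⟩, ?_⟩
  · intro h
    apply hA.eigenvectorBasis.toBasis.ne_zero (Tuple.sort hA.eigenvalues ⟨0, hn⟩)
    ext i
    simpa using congrFun h i
  · intro c v hv h
    have hc : c ∈ spectrum ℝ A := by
      rw [← Matrix.spectrum_toLin', ← Module.End.hasEigenvalue_iff_mem_spectrum]
      exact Module.End.hasEigenvalue_of_hasEigenvector (x := v)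
        ⟨Module.End.mem_eigenspace_iff.2 (by simpa using h), hv⟩
    rw [hA.spectrum_real_eq_range_eigenvalues] at hc
    obtain ⟨i, rfl⟩ := hc
    have := Tuple.monotone_sort hA.eigenvalues
      (show (⟨0, hn⟩ : Fin n) ≤ (Tuple.sort hA.eigenvalues).symm i from Nat.zero_le _)
    simpa using this

theorem stmt_4 {n k : ℕ} (hn : 0 < n) (G : SimpleGraph (Fin n)) [DecidableRel G.Adj]
    (F : Fin k → Finset (Fin n)) (hF : IsCliquePartition G F) :
    (-((Finset.univ.sup (cliqueDeg F) : ℕ) : ℝ) ≤ eigsDesc (G.adjMatrix ℝ) ⟨n - 1, by omega⟩) ∧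
    (eigsDesc (G.adjMatrix ℝ) ⟨n - 1, by omega⟩ = -((Finset.univ.sup (cliqueDeg F) : ℕ) : ℝ) →
      (vcMat F).rank < n) ∧
    ((vcMat F).rank < n → (∀ a b, cliqueDeg F a = cliqueDeg F b) →
      eigsDesc (G.adjMatrix ℝ) ⟨n - 1, by omega⟩ = -((Finset.univ.sup (cliqueDeg F) : ℕ) : ℝ)) := by
  have hA : (G.adjMatrix ℝ).IsHermitian := by
    rw [Matrix.IsHermitian, Matrix.conjTranspose_eq_transpose_of_trivial]
    exact G.isSymm_adjMatrix
  obtain ⟨⟨v, hv, hAv⟩, hmin⟩ := eigsDesc_last_spec hn (Nat.sub_lt hn one_pos) _ hA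
  have hM := vcMat_mul_transpose G F hF
  set t := Finset.univ.sup (cliqueDeg F) with ht
  set μ := eigsDesc (G.adjMatrix ℝ) ⟨n - 1, by omega⟩
  have hd : ∀ i, (cliqueDeg F i : ℝ) ≤ t := fun i =>
    Nat.cast_le.2 (Finset.le_sup (f := cliqueDeg F) (Finset.mem_univ i))
  have hvv : 0 < v ⬝ᵥ v :=
    lt_of_le_of_ne (by simpa using dotProduct_star_self_nonneg v)
      (fun h => hv (dotProduct_self_eq_zero.1 h.symm))
  have hnn : 0 ≤ (v ᵥ* vcMat F) ⬝ᵥ (v ᵥ* vcMat F) := by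
    simpa using dotProduct_star_self_nonneg (v ᵥ* vcMat F)
  have hle : (v ᵥ* vcMat F) ⬝ᵥ (v ᵥ* vcMat F) ≤ (μ + t) * (v ⬝ᵥ v) := by
    have e : (v ᵥ* vcMat F) ⬝ᵥ (v ᵥ* vcMat F) = v ⬝ᵥ ((vcMat F * (vcMat F)ᵀ) *ᵥ v) := by
      rw [← Matrix.mulVec_mulVec, Matrix.mulVec_transpose, Matrix.dotProduct_mulVec]
    rw [e, hM, Matrix.add_mulVec, hAv, dotProduct_add, dotProduct_smul, smul_eq_mul, add_mul]
    gcongr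
    simp only [dotProduct, Matrix.mulVec_diagonal, Finset.mul_sum]
    refine Finset.sum_le_sum fun i _ => ?_
    nlinarith [mul_le_mul_of_nonneg_right (hd i) (mul_self_nonneg (v i))]
  have h1 : -(t : ℝ) ≤ μ := by
    have := nonneg_of_mul_nonneg_left (hnn.trans hle) hvv
    linarith
  refine ⟨h1, fun h => ?_, fun hr hreg => le_antisymm ?_ h1⟩
  · refine (rank_lt_iff_exists_vecMul _).2 ⟨v, hv, dotProduct_self_eq_zero.1 (le_antisymm ?_ hnn)⟩
    simpa [h] using hle
  · obtain ⟨w, hw, hw0⟩ := (rank_lt_iff_exists_vecMul _).1 hr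
    refine hmin _ w hw ?_
    have hdt : ∀ i, cliqueDeg F i = t := fun i =>
      le_antisymm (Finset.le_sup (f := cliqueDeg F) (Finset.mem_univ i))
        (Finset.sup_le fun j _ => (hreg j i).le)
    have h0 : (vcMat F * (vcMat F)ᵀ) *ᵥ w = 0 := by
      rw [← Matrix.mulVec_mulVec, Matrix.mulVec_transpose, hw0, Matrix.mulVec_zero]
    rw [hM, Matrix.add_mulVec] at h0
    rw [eq_neg_of_add_eq_zero_left h0]
    ext i
    simp [hdt]
end

section
/- Let G be a simple graph on n vertices with negative inertia ν^− and let F be any clique partition of G with clique-degrees t_1^F ≥ t_2^F ≥ ... ≥ t_n^F. Then the energy of G satisfies E(G) ≤ 2 Σ_{i=1}^{ν^−} t_i^F. Moreover, equality holds if G is clique-regular with respect to a minimum clique partition F of size cp(G) = n − ν^−. -/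
/-!
Counting, for two vertices, the cliques of `F` containing both gives `A + D = B Bᵀ`, where `A` is
the adjacency matrix, `D` the diagonal matrix of clique-degrees and `B` the vertex-clique incidence
matrix (`adj_add_deg`). Diagonalizing `A` by an orthogonal matrix `V`, the matrix
`Vᵀ B Bᵀ V = diag(λ) + Vᵀ D V` has a nonnegative diagonal, so `-λ_j ≤ ∑ i, V i j ^ 2 * t i` for every
eigenvalue. As `A` has trace zero, the energy is twice the sum of `-λ_j` over the negative
eigenvalues (`energy_eq`), and is therefore at most `2 * ∑ i, w i * t i`, where `w i` is the sum of
`V i j ^ 2` over those `j`. The weights `w i` lie in `[0, 1]` and add up to the negative inertia `ν`, so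
the sum is at most the sum of the `ν` largest clique-degrees (`weighted_le_top`).

If all clique-degrees equal `t` then `Vᵀ B Bᵀ V = diag(λ + t)` has rank at most the number of cliques,
so when there are `n - ν` cliques at least `ν` eigenvalues equal `-t`. For `t > 0` these are all the
negative eigenvalues, and the energy is exactly `2νt`.
-/


open Matrix Finset

/-- The clique partition number: the least size of a clique partition of `G`. -/
noncomputable def cpNum {n : ℕ} (G : SimpleGraph (Fin n)) : ℕ :=
  sInf {k | ∃ F : Fin k → Finset (Fin n), IsCliquePartition G F}

lemma sum_eigsDesc {N : ℕ} (A : Matrix (Fin N) (Fin N) ℝ) (hA : A.IsHermitian) :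
    ∑ i, |eigsDesc A i| = ∑ i, |hA.eigenvalues i| := by
  simp only [eigsDesc, hA, dif_pos, Function.comp]
  exact Equiv.sum_comp (Fin.revPerm.trans (Tuple.sort hA.eigenvalues)) fun i => |hA.eigenvalues i|

lemma energy_eq {N : ℕ} (A : Matrix (Fin N) (Fin N) ℝ) (hA : A.IsHermitian) (h0 : A.trace = 0) :
    ∑ i, |eigsDesc A i| = 2 * ∑ i with hA.eigenvalues i < 0, -hA.eigenvalues i := by
  have htr : ∑ i, hA.eigenvalues i = 0 := by
    have := hA.trace_eq_sum_eigenvalues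
    rw [h0] at this
    simpa using this.symm
  have h : ∀ i, |hA.eigenvalues i| =
      2 * (if hA.eigenvalues i < 0 then -hA.eigenvalues i else 0) + hA.eigenvalues i := fun i => by
    split_ifs with h
    · rw [abs_of_neg h]; ring
    · rw [abs_of_nonneg (not_lt.1 h)]; ring
  rw [sum_eigsDesc A hA, Finset.sum_congr rfl fun i _ => h i, Finset.sum_add_distrib, htr,
    add_zero, ← Finset.mul_sum, Finset.sum_filter]

lemma sortedDesc_antitone {N : ℕ} (f : Fin N → ℕ) : Antitone (sortedDesc f) :=
  fun _ _ h => Tuple.monotone_sort f (Fin.rev_le_rev.2 h)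

/-- Weights in `[0, 1]` of total mass `m` are best placed on the `m` largest values. -/
lemma weighted_le_top {N m : ℕ} (f : Fin N → ℕ) (w : Fin N → ℝ) (h0 : ∀ i, 0 ≤ w i)
    (h1 : ∀ i, w i ≤ 1) (hm : m ≤ N) (hw : ∑ i, w i = m) :
    ∑ i, w i * f i ≤
      ∑ i ∈ Finset.univ.filter (fun i : Fin N => (i : ℕ) < m), (sortedDesc f i : ℝ) := by
  set e : Equiv.Perm (Fin N) := Fin.revPerm.trans (Tuple.sort f)
  have hs : ∀ i, sortedDesc f i = f (e i) := fun i => rfl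
  -- `c` is a threshold separating the `m` largest values from the others.
  obtain ⟨c, hc1, hc2⟩ : ∃ c : ℝ, (∀ i : Fin N, (i : ℕ) < m → c ≤ sortedDesc f i) ∧
      ∀ i : Fin N, m ≤ (i : ℕ) → (sortedDesc f i : ℝ) ≤ c := by
    rcases hm.lt_or_eq with h | h
    · refine ⟨sortedDesc f ⟨m, h⟩, fun i hi => ?_, fun i hi => ?_⟩
      · exact_mod_cast sortedDesc_antitone f (show i ≤ ⟨m, h⟩ from hi.le)
      · exact_mod_cast sortedDesc_antitone f (show (⟨m, h⟩ : Fin N) ≤ i from hi)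
    · exact ⟨0, fun i _ => by positivity, fun i hi => by have := i.2; omega⟩
  have hcard : ∑ i : Fin N, (if (i : ℕ) < m then (1 : ℝ) else 0) = m := by
    rw [Finset.sum_boole, Fin.card_filter_val_lt, min_eq_right hm]
  have hwe : ∑ i, w (e i) = m := by rw [Equiv.sum_comp e w, hw]
  have key : 0 ≤ ∑ i : Fin N,
      ((if (i : ℕ) < m then (1 : ℝ) else 0) - w (e i)) * (sortedDesc f i - c) := by
    refine Finset.sum_nonneg fun i _ => ?_
    split_ifs with h
    · exact mul_nonneg (sub_nonneg.2 (h1 _)) (sub_nonneg.2 (hc1 i h))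
    · exact mul_nonneg_of_nonpos_of_nonpos (by linarith [h0 (e i)])
        (sub_nonpos.2 (hc2 i (not_lt.1 h)))
  have expand : ∑ i : Fin N,
      ((if (i : ℕ) < m then (1 : ℝ) else 0) - w (e i)) * (sortedDesc f i - c)
      = ∑ i : Fin N, (if (i : ℕ) < m then (sortedDesc f i : ℝ) else 0)
        - ∑ i, w (e i) * f (e i)
        - c * (∑ i : Fin N, (if (i : ℕ) < m then (1 : ℝ) else 0) - ∑ i, w (e i)) := by
    rw [← Finset.sum_sub_distrib, ← Finset.sum_sub_distrib, Finset.mul_sum,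
      ← Finset.sum_sub_distrib]
    refine Finset.sum_congr rfl fun i _ => ?_
    rw [hs]
    split_ifs <;> ring
  rw [expand, hcard, hwe, Equiv.sum_comp e fun i => w i * f i] at key
  rw [Finset.sum_filter]
  linarith

lemma adj_add_deg {n k : ℕ} (G : SimpleGraph (Fin n)) [DecidableRel G.Adj]
    (F : Fin k → Finset (Fin n)) (hF : IsCliquePartition G F) :
    G.adjMatrix ℝ + Matrix.diagonal (fun i => (cliqueDeg F i : ℝ)) = vcMat F * (vcMat F)ᵀ := by
  ext u v
  have hmul : (vcMat F * (vcMat F)ᵀ) u v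
      = ((Finset.univ.filter fun j => u ∈ F j ∧ v ∈ F j).card : ℝ) := by
    simp [Matrix.mul_apply, vcMat, ← ite_and, Finset.sum_boole, and_comm]
  rw [hmul]
  rcases eq_or_ne u v with rfl | huv
  · simp [cliqueDeg]
  · rw [Matrix.add_apply, Matrix.diagonal_apply_ne _ huv, SimpleGraph.adjMatrix_apply, add_zero]
    split_ifs with h
    · obtain ⟨j, hj, hj'⟩ := hF.2 h
      rw [(Finset.card_eq_one (s := Finset.univ.filter fun j => u ∈ F j ∧ v ∈ F j)).2 ⟨j, ?_⟩]
      · simp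
      · ext l
        simp only [Finset.mem_filter, Finset.mem_univ, true_and, Finset.mem_singleton]
        exact ⟨hj' l, fun h => h ▸ hj⟩
    · rw [Finset.filter_eq_empty_iff.2]
      · simp
      · rintro j - ⟨hu, hv⟩
        exact h (hF.1 j hu hv huv)

theorem stmt_15 {n k : ℕ} (G : SimpleGraph (Fin n)) [DecidableRel G.Adj]
    (F : Fin k → Finset (Fin n)) (hF : IsCliquePartition G F) :
    (∑ i : Fin n, |eigsDesc (G.adjMatrix ℝ) i| ≤
      2 * ∑ i ∈ Finset.univ.filter (fun i : Fin n => (i : ℕ) < negInertia (G.adjMatrix ℝ)),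
        (sortedDesc (cliqueDeg F) i : ℝ)) ∧
    ((∀ a b, cliqueDeg F a = cliqueDeg F b) → k = cpNum G →
      cpNum G = n - negInertia (G.adjMatrix ℝ) →
      ∑ i : Fin n, |eigsDesc (G.adjMatrix ℝ) i| =
        2 * ∑ i ∈ Finset.univ.filter (fun i : Fin n => (i : ℕ) < negInertia (G.adjMatrix ℝ)),
          (sortedDesc (cliqueDeg F) i : ℝ)) := by
  set A := G.adjMatrix ℝ with hAdef
  have hA : A.IsHermitian := by
    rw [Matrix.IsHermitian, Matrix.conjTranspose_eq_transpose_of_trivial]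
    exact G.isSymm_adjMatrix
  set lam := hA.eigenvalues with hlam
  set V : Matrix (Fin n) (Fin n) ℝ := hA.eigenvectorUnitary.val with hV
  have hVV : Vᵀ * V = 1 := by
    have := (Matrix.mem_unitaryGroup_iff' (A := V)).1 hA.eigenvectorUnitary.2
    simpa [Matrix.star_eq_conjTranspose, Matrix.conjTranspose_eq_transpose_of_trivial] using this
  have hVV' : V * Vᵀ = 1 := mul_eq_one_comm.1 hVV
  have hspec : A = V * Matrix.diagonal lam * Vᵀ := by
    have := hA.spectral_theorem
    simpa [Unitary.conjStarAlgAut_apply, Matrix.star_eq_conjTranspose,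
      Matrix.conjTranspose_eq_transpose_of_trivial, Function.comp_def] using this
  have hdiag : Vᵀ * A * V = Matrix.diagonal lam := by
    rw [hspec]
    calc Vᵀ * (V * Matrix.diagonal lam * Vᵀ) * V
        = (Vᵀ * V) * Matrix.diagonal lam * (Vᵀ * V) := by simp only [Matrix.mul_assoc]
      _ = _ := by rw [hVV]; simp
  set t := cliqueDeg F with ht
  set D : Matrix (Fin n) (Fin n) ℝ := Matrix.diagonal (fun i => (t i : ℝ)) with hD
  have hAD : A + D = vcMat F * (vcMat F)ᵀ := adj_add_deg G F hF
  have hconj : Matrix.diagonal lam + Vᵀ * D * V = (Vᵀ * vcMat F) * (Vᵀ * vcMat F)ᵀ := by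
    rw [← hdiag, ← Matrix.add_mul, ← Matrix.mul_add, hAD, Matrix.transpose_mul,
      Matrix.transpose_transpose]
    simp only [Matrix.mul_assoc]
  have hν : negInertia A = (Finset.univ.filter fun i => lam i < 0).card := by
    simp only [negInertia, hA, dif_pos, hlam]
  have hE := energy_eq A hA (by simp [hAdef])
  rw [← hlam] at hE
  have hcol : ∀ j, ∑ i, V i j ^ 2 = 1 := fun j => by
    have := congrFun (congrFun hVV j) j
    simpa [Matrix.mul_apply, sq] using this
  have hrow : ∀ i, ∑ j, V i j ^ 2 = 1 := fun i => by
    have := congrFun (congrFun hVV' i) i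
    simpa [Matrix.mul_apply, sq] using this
  have hνn : negInertia A ≤ n := by
    rw [hν]; simpa using Finset.card_filter_le (Finset.univ : Finset (Fin n)) (fun i => lam i < 0)
  have hle : ∑ i : Fin n, |eigsDesc A i| ≤
      2 * ∑ i ∈ Finset.univ.filter (fun i : Fin n => (i : ℕ) < negInertia A),
        (sortedDesc t i : ℝ) := by
    have hray : ∀ j, -lam j ≤ ∑ i, V i j ^ 2 * t i := fun j => by
      have h1 := congrFun (congrFun hconj j) j
      have h2 : (Vᵀ * D * V) j j = ∑ i, V i j ^ 2 * t i := by
        rw [hD, Matrix.mul_apply]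
        refine Finset.sum_congr rfl fun i _ => ?_
        rw [Matrix.mul_diagonal, Matrix.transpose_apply]; ring
      have h3 : 0 ≤ ((Vᵀ * vcMat F) * (Vᵀ * vcMat F)ᵀ) j j := by
        rw [Matrix.mul_apply]
        exact Finset.sum_nonneg fun l _ => mul_self_nonneg _
      rw [Matrix.add_apply, Matrix.diagonal_apply_eq, h2] at h1
      linarith
    rw [hE]
    refine mul_le_mul_of_nonneg_left ?_ zero_le_two
    calc ∑ j with lam j < 0, -lam j ≤ ∑ j with lam j < 0, ∑ i, V i j ^ 2 * t i :=
          Finset.sum_le_sum fun j _ => hray j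
      _ = ∑ i, (∑ j with lam j < 0, V i j ^ 2) * t i := by
          rw [Finset.sum_comm]; simp only [Finset.sum_mul]
      _ ≤ _ := by
          refine weighted_le_top t _ (fun i => Finset.sum_nonneg fun j _ => sq_nonneg _)
            (fun i => ?_) hνn ?_
          · rw [← hrow i]
            exact Finset.sum_le_sum_of_subset_of_nonneg (Finset.filter_subset _ _)
              fun j _ _ => sq_nonneg _
          · rw [Finset.sum_comm, hν]; simp [hcol]
  refine ⟨hle, fun hreg hk hcp => le_antisymm hle ?_⟩
  rcases Nat.eq_zero_or_pos n with hn | hn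
  · subst hn; simp
  -- `c` is the common clique-degree.
  set c := t ⟨0, hn⟩ with hc
  have htc : ∀ i, t i = c := fun i => hreg _ _
  have hR : ∑ i ∈ Finset.univ.filter (fun i : Fin n => (i : ℕ) < negInertia A),
      (sortedDesc t i : ℝ) = negInertia A * c := by
    have : ∀ i, sortedDesc t i = c := fun i => htc _
    simp only [this, Finset.sum_const, Fin.card_filter_val_lt, min_eq_right hνn, nsmul_eq_mul]
  rw [hR]
  rcases Nat.eq_zero_or_pos c with hc0 | hcpos
  · rw [hc0]; simpa using Finset.sum_nonneg fun i _ => abs_nonneg (eigsDesc A i)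
  have hrank : (Finset.univ.filter fun i => lam i + c ≠ 0).card ≤ k := by
    have hDc : Vᵀ * D * V = Matrix.diagonal fun _ => (c : ℝ) := by
      have : D = (c : ℝ) • (1 : Matrix (Fin n) (Fin n) ℝ) := by
        rw [hD, Matrix.smul_one_eq_diagonal]; simp only [htc]
      rw [this, Matrix.mul_smul, Matrix.mul_one, Matrix.smul_mul, hVV,
        Matrix.smul_one_eq_diagonal]
    rw [hDc, Matrix.diagonal_add] at hconj
    have h1 := Matrix.rank_diagonal fun i => lam i + (c : ℝ)
    rw [hconj, Fintype.card_subtype] at h1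
    rw [← h1]
    calc _ ≤ (Vᵀ * vcMat F).rank := Matrix.rank_mul_le_left _ _
      _ ≤ k := by simpa using Matrix.rank_le_width (Vᵀ * vcMat F)
  have hsub : (Finset.univ.filter fun i => lam i + c = 0) ⊆
      Finset.univ.filter fun i => lam i < 0 := fun i hi => by
    simp only [Finset.mem_filter, Finset.mem_univ, true_and] at hi ⊢
    have : (0 : ℝ) < c := by exact_mod_cast hcpos
    linarith
  have hcount := Finset.card_filter_add_card_filter_not (s := (Finset.univ : Finset (Fin n)))
    (fun i => lam i + c = 0)
  rw [Finset.card_univ, Fintype.card_fin] at hcount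
  have heq := Finset.eq_of_subset_of_card_le hsub (by rw [← hν]; simp only [ne_eq] at hrank; omega)
  rw [hE, hν, ← heq]
  refine (congrArg (2 * ·) ?_).ge
  rw [← nsmul_eq_mul, ← Finset.sum_const]
  refine Finset.sum_congr rfl fun i hi => ?_
  have := (Finset.mem_filter.1 hi).2
  linarith
end

section
/- For every even integer n ≥ 4, the complement of the cycle graph C_n satisfies q(complement of C_n) = 2. -/
/-!
A symmetric idempotent matrix other than `0` and `1` has exactly the eigenvalues `0` and `1`, and a
real symmetric matrix with a nonzero off-diagonal entry has at least two eigenvalues. So it is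
enough to find a symmetric idempotent in `S(G)`, `G` the complement of `C_n`, that is, a Parseval
frame `v_0, …, v_{n-1}` with `v_i ⟂ v_j` exactly when `i` and `j` are consecutive modulo `n`.

For `n = 2m` with `m ≥ 3` such a frame exists in `ℝ³`. Put `ψ_i = 2πi/n` and `K = cos (2π/n)`, and
take `v_i = a (cos ψ_i, sin ψ_i, r)` for even `i` and `v_i = b (-r cos ψ_i, -r sin ψ_i, K)` for odd
`i`.
* For `i`, `j` of opposite parity the inner product is `a b r (K - cos (ψ_i - ψ_j))`, which vanishes
  exactly when `i - j ≡ ±1` modulo `n`.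
* For `i`, `j` both odd it is `b² (r² cos (ψ_i - ψ_j) + K²)`, positive since `r < 1/2 ≤ K`.
* For `i`, `j` both even it is `a² (cos (ψ_i - ψ_j) + r²)`, nonzero as soon as `r²` avoids finitely
  many values.
* By rotational symmetry `∑ v_i v_iᵀ` is diagonal with entries `x, x, y`, where
  `x = m (a² + b² r²) / 2` and `y = m (a² r² + b² K²)`. Both equal `1` for
  `a² = (2K² - r²) s`, `b² = (1 - 2r²) s`, `s = 1 / (m (K² - r²r²))`.

For `n = 4` the constant `K` is `0`, and half of the "equal parity" matrix does the job.
-/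

open Matrix Finset

/-- `S(G)`: real symmetric matrices whose off-diagonal zero/nonzero pattern is given by `G`. -/
def SMat {V : Type*} [Fintype V] (G : SimpleGraph V) : Set (Matrix V V ℝ) :=
  {A | A.IsSymm ∧ ∀ i j, i ≠ j → (A i j ≠ 0 ↔ G.Adj i j)}

/-- The Strong Spectral Property of a real symmetric matrix. -/
def HasSSP {V : Type*} [Fintype V] [DecidableEq V] (A : Matrix V V ℝ) : Prop :=
  ∀ X : Matrix V V ℝ, X.IsSymm → Matrix.hadamard A X = 0 →
    Matrix.hadamard (1 : Matrix V V ℝ) X = 0 → A * X - X * A = 0 → X = 0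

/-- `q(G)`: the minimum number of distinct eigenvalues over matrices in `S(G)`. -/
noncomputable def qNum {V : Type*} [Fintype V] [DecidableEq V] (G : SimpleGraph V) : ℕ :=
  sInf {m | ∃ A ∈ SMat G, (spectrum ℝ A).ncard = m}

/-! ### Moments of a regular polygon -/

open Real in
/-- Cosines along an arithmetic progression that closes up modulo `2π` sum to zero: after
multiplication by `2 sin (d/2)` the sum telescopes. -/
lemma sum_cos_arith (m j : ℕ) (d x : ℝ) (h : sin (d / 2) ≠ 0) (hd : m * d = j * (2 * π)) :
    ∑ k ∈ range m, cos (x + k * d) = 0 := by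
  have h1 : ∀ N : ℕ, 2 * sin (d / 2) * ∑ k ∈ range N, cos (x + k * d)
      = sin (x - d / 2 + N * d) - sin (x - d / 2) := by
    intro N
    induction N with
    | zero => simp
    | succ N ih =>
      rw [sum_range_succ, mul_add, ih]
      have e1 : x - d / 2 + N * d = (x + N * d) - d / 2 := by ring
      have e2 : x - d / 2 + ((N + 1 : ℕ) : ℝ) * d = (x + N * d) + d / 2 := by push_cast; ring
      rw [e1, e2, sin_add, sin_sub (x + N * d)]
      ring
  have h2 := h1 m
  rw [hd, sin_add_nat_mul_two_pi, sub_self] at h2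
  exact (mul_eq_zero.mp h2).resolve_left (by simpa using h)

open Real in
/-- First and second moments of the vertices of a regular `m`-gon, `m ≥ 3`. -/
lemma polygon_moments (m : ℕ) (hm : 3 ≤ m) (x : ℝ) :
    ∑ k ∈ range m, cos (x + k * (2 * π / m)) = 0 ∧
    ∑ k ∈ range m, sin (x + k * (2 * π / m)) = 0 ∧
    ∑ k ∈ range m, cos (x + k * (2 * π / m)) ^ 2 = m / 2 ∧
    ∑ k ∈ range m, sin (x + k * (2 * π / m)) ^ 2 = m / 2 ∧
    ∑ k ∈ range m, sin (x + k * (2 * π / m)) * cos (x + k * (2 * π / m)) = 0 := by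
  have hm3 : (3 : ℝ) ≤ m := by exact_mod_cast hm
  have hm0 : (0 : ℝ) < m := by linarith
  have hpi := pi_pos
  have s1 : sin (2 * π / m / 2) ≠ 0 := by
    apply (sin_pos_of_pos_of_lt_pi (by positivity) _).ne'
    rw [div_div, div_lt_iff₀ (by positivity)]; nlinarith
  have s2 : sin (2 * (2 * π / m) / 2) ≠ 0 := by
    apply (sin_pos_of_pos_of_lt_pi (by positivity) _).ne'
    rw [mul_div_cancel_left₀ _ two_ne_zero, div_lt_iff₀ (by positivity)]; nlinarith
  have E1 : ∀ y, ∑ k ∈ range m, cos (y + k * (2 * π / m)) = 0 := fun y =>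
    sum_cos_arith m 1 _ y s1 (by field_simp; simp)
  have E2 : ∀ y, ∑ k ∈ range m, cos (y + k * (2 * (2 * π / m))) = 0 := fun y =>
    sum_cos_arith m 2 _ y s2 (by field_simp; simp)
  have hc : ∀ k : ℕ, cos (x + k * (2 * π / m)) ^ 2
      = 1 / 2 + cos (2 * x + k * (2 * (2 * π / m))) / 2 := by
    intro k; rw [cos_sq]; ring_nf
  refine ⟨E1 x, ?_, ?_, ?_, ?_⟩
  · rw [← E1 (x - π / 2)]
    refine sum_congr rfl fun k _ => ?_
    rw [← cos_sub_pi_div_two]; ring_nf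
  · simp_rw [hc]
    simp only [sum_add_distrib, ← sum_div, E2]
    simp
  · simp_rw [sin_sq, hc]
    simp only [sum_sub_distrib, sum_add_distrib, ← sum_div, E2]
    simp; ring
  · have hs : ∀ k : ℕ, sin (x + k * (2 * π / m)) * cos (x + k * (2 * π / m))
      = cos ((2 * x - π / 2) + k * (2 * (2 * π / m))) / 2 := by
      intro k
      have e : (2 * x - π / 2) + k * (2 * (2 * π / m)) = 2 * (x + k * (2 * π / m)) - π / 2 := by
        ring
      rw [e, cos_sub_pi_div_two, sin_two_mul]; ring
    simp_rw [hs]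
    rw [← sum_div, E2, zero_div]

lemma sum_range_two_mul (m : ℕ) (f : ℕ → ℝ) :
    ∑ i ∈ range (2 * m), f i = ∑ k ∈ range m, f (2 * k) + ∑ k ∈ range m, f (2 * k + 1) := by
  induction m with
  | zero => simp
  | succ m ih =>
    rw [show 2 * (m + 1) = 2 * m + 1 + 1 by ring, sum_range_succ, sum_range_succ, ih,
      sum_range_succ, sum_range_succ]
    ring

/-! ### Spectra of symmetric and idempotent matrices -/

/-- A real symmetric matrix with a single eigenvalue is scalar, so one nonzero off-diagonal entry
forces two eigenvalues. -/
lemma two_le_ncard_spectrum {n : ℕ} {A : Matrix (Fin n) (Fin n) ℝ} (hA : A.IsSymm)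
    {i j : Fin n} (hij : i ≠ j) (h : A i j ≠ 0) : 2 ≤ (spectrum ℝ A).ncard := by
  have hH : A.IsHermitian := by
    rw [Matrix.IsHermitian, Matrix.conjTranspose_eq_transpose_of_trivial]; exact hA
  by_contra hlt
  have hle : (spectrum ℝ A).ncard ≤ 1 := by omega
  have hfin : (spectrum ℝ A).Finite := by
    rw [hH.spectrum_real_eq_range_eigenvalues]; exact Set.finite_range _
  rw [Set.ncard_le_one hfin] at hle
  have hc : ∀ k, hH.eigenvalues k = hH.eigenvalues i := fun k =>
    hle _ (hH.eigenvalues_mem_spectrum_real k) _ (hH.eigenvalues_mem_spectrum_real i)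
  have hs := hH.spectral_theorem
  have hd : diagonal ((RCLike.ofReal : ℝ → ℝ) ∘ hH.eigenvalues)
      = (hH.eigenvalues i) • (1 : Matrix (Fin n) (Fin n) ℝ) := by
    rw [smul_one_eq_diagonal]
    congr 1
    funext k
    simp [hc k]
  rw [hd, map_smul, map_one] at hs
  apply h
  rw [hs]
  simp [hij]

lemma spectrum_idem {n : ℕ} {A : Matrix (Fin n) (Fin n) ℝ} (hA : A * A = A) :
    (spectrum ℝ A).ncard ≤ 2 := by
  have : spectrum ℝ A ⊆ {0, 1} := by
    exact IsIdempotentElem.spectrum_subset ℝ hA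
  refine (Set.ncard_le_ncard this (by simp)).trans ?_
  exact (Set.ncard_pair zero_ne_one).le

/-- A symmetric idempotent with the right zero pattern realises `q = 2`. -/
lemma qNum_eq_two_of_idem {n : ℕ} {G : SimpleGraph (Fin n)} {i j : Fin n} (hij : G.Adj i j)
    {A : Matrix (Fin n) (Fin n) ℝ} (hA : A ∈ SMat G) (hAA : A * A = A) : qNum G = 2 := by
  have hlow : ∀ B ∈ SMat G, 2 ≤ (spectrum ℝ B).ncard := fun B hB =>
    two_le_ncard_spectrum hB.1 hij.ne ((hB.2 i j hij.ne).2 hij)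
  apply le_antisymm
  · exact Nat.sInf_le ⟨A, hA, le_antisymm (spectrum_idem hAA) (hlow A hA)⟩
  · refine le_csInf ⟨_, A, hA, rfl⟩ ?_
    rintro m ⟨B, hB, rfl⟩
    exact hlow B hB

/-! ### Adjacency in the cycle and angles -/

lemma cycleGraph_adj_val {n : ℕ} (hn : 4 ≤ n) (i j : Fin n) :
    (SimpleGraph.cycleGraph n).Adj i j ↔
      ((i : ℕ) + 1 = j ∨ (j : ℕ) + 1 = i ∨ (i : ℕ) + n = j + 1 ∨ (j : ℕ) + n = i + 1) := by
  rw [SimpleGraph.cycleGraph_adj', Fin.sub_def, Fin.sub_def]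
  have key : ∀ a b : ℕ, a < n → b < n → ((n - b + a) % n = 1 ↔ b + 1 = a ∨ a + n = b + 1) := by
    intro a b ha hb
    rcases lt_or_ge a b with h | h
    · rw [Nat.mod_eq_of_lt (by omega)]; omega
    · rw [show n - b + a = (a - b) + n by omega, Nat.add_mod_right, Nat.mod_eq_of_lt (by omega)]
      omega
  simp only [key _ _ i.2 j.2, key _ _ j.2 i.2]
  omega

open Real in
lemma cos_eq_iff_consecutive {n : ℕ} (hn : 4 ≤ n) (i j : Fin n) :
    cos (2 * π * i / n - 2 * π * j / n) = cos (2 * π / n) ↔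
      ((i : ℕ) + 1 = j ∨ (j : ℕ) + 1 = i ∨ (i : ℕ) + n = j + 1 ∨ (j : ℕ) + n = i + 1) := by
  have hn0 : (n : ℝ) ≠ 0 := by have : n ≠ 0 := by omega
                               exact_mod_cast this
  have hpi := pi_ne_zero
  have hi := i.2
  have hj := j.2
  rw [eq_comm, cos_eq_cos_iff]
  constructor
  · rintro ⟨k, hk⟩
    have hk' : ((i : ℤ) - j = k * n + 1) ∨ ((i : ℤ) - j = k * n - 1) := by
      rcases hk with hk | hk
      · left
        field_simp at hk
        have : ((i : ℕ) : ℝ) - (j : ℕ) = k * n + 1 := by linarith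
        exact_mod_cast this
      · right
        field_simp at hk
        have : ((i : ℕ) : ℝ) - (j : ℕ) = k * n - 1 := by linarith
        exact_mod_cast this
    have hk1 : k < 2 := by
      by_contra hc
      have : (2 : ℤ) * n ≤ k * n := mul_le_mul_of_nonneg_right (by omega) (by omega)
      omega
    have hk2 : -2 < k := by
      by_contra hc
      have : k * (n : ℤ) ≤ (-2) * n := mul_le_mul_of_nonneg_right (by omega) (by omega)
      omega
    interval_cases k <;> omega
  · rintro (h | h | h | h)
    · refine ⟨0, Or.inr ?_⟩
      rw [← h]; push_cast; field_simp; ring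
    · refine ⟨0, Or.inl ?_⟩
      rw [← h]; push_cast; field_simp; ring
    · refine ⟨-1, Or.inl ?_⟩
      have h' : ((i : ℕ) : ℝ) = j + 1 - n := by rw [eq_sub_iff_add_eq]; exact_mod_cast h
      rw [h']; push_cast; field_simp; ring
    · refine ⟨1, Or.inr ?_⟩
      have h' : ((j : ℕ) : ℝ) = i + 1 - n := by rw [eq_sub_iff_add_eq]; exact_mod_cast h
      rw [h']; push_cast; field_simp; ring

/-! ### The frame in `ℝ³` -/

open Real in
/-- The frame vectors in `ℝ³`: even indices lie on one circular cone around the third axis, odd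
indices on another. -/
noncomputable def frameVec (n : ℕ) (a b r K : ℝ) (i : ℕ) : Fin 3 → ℝ :=
  if i % 2 = 0 then ![a * cos (2 * π * i / n), a * sin (2 * π * i / n), a * r]
  else ![-(b * r * cos (2 * π * i / n)), -(b * r * sin (2 * π * i / n)), b * K]

open Real in
/-- The frame is Parseval, `∑ v_i v_iᵀ = 1`, under two linear conditions on `a²` and `b²`: the even
and the odd vectors each contribute a diagonal matrix, by the moments of a regular `m`-gon. -/
lemma frame_parseval (m : ℕ) (hm : 3 ≤ m) (a b r K : ℝ)
    (h1 : m * (a ^ 2 + b ^ 2 * r ^ 2) = 2) (h2 : m * (a ^ 2 * r ^ 2 + b ^ 2 * K ^ 2) = 1)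
    (p q : Fin 3) :
    ∑ i ∈ range (2 * m), frameVec (2 * m) a b r K i p * frameVec (2 * m) a b r K i q
      = if p = q then 1 else 0 := by
  have hm0 : (m : ℝ) ≠ 0 := by have : m ≠ 0 := by omega
                               exact_mod_cast this
  have ev : ∀ k : ℕ, frameVec (2 * m) a b r K (2 * k)
      = ![a * cos (0 + k * (2 * π / m)), a * sin (0 + k * (2 * π / m)), a * r] := by
    intro k
    have e : 2 * π * ((2 * k : ℕ) : ℝ) / ((2 * m : ℕ) : ℝ) = 0 + k * (2 * π / m) := by
      push_cast; field_simp; ring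
    rw [frameVec, if_pos (by omega), e]
  have od : ∀ k : ℕ, frameVec (2 * m) a b r K (2 * k + 1)
      = ![-(b * r * cos (π / m + k * (2 * π / m))), -(b * r * sin (π / m + k * (2 * π / m))),
          b * K] := by
    intro k
    have e : 2 * π * ((2 * k + 1 : ℕ) : ℝ) / ((2 * m : ℕ) : ℝ) = π / m + k * (2 * π / m) := by
      push_cast; field_simp; ring
    rw [frameVec, if_neg (by omega), e]
  obtain ⟨c1, c2, c3, c4, c5⟩ := polygon_moments m hm 0
  obtain ⟨d1, d2, d3, d4, d5⟩ := polygon_moments m hm (π / m)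
  rw [sum_range_two_mul]
  simp only [ev, od]
  generalize π / m = x at *
  generalize 2 * π / m = d at *
  -- Each entry is a linear combination of the moments.
  have L : ∀ (f g : ℕ → ℝ) (u v S T : ℝ), ∑ k ∈ range m, f k = S → ∑ k ∈ range m, g k = T →
      ∑ k ∈ range m, u * f k + ∑ k ∈ range m, v * g k = u * S + v * T := by
    intro f g u v S T hS hT
    rw [← mul_sum, ← mul_sum, hS, hT]
  have one : ∑ k ∈ range m, (fun _ => (1 : ℝ)) k = m := by simp
  have M00 := L _ _ (a ^ 2) (b ^ 2 * r ^ 2) _ _ c3 d3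
  have M11 := L _ _ (a ^ 2) (b ^ 2 * r ^ 2) _ _ c4 d4
  have M22 := L _ _ (a ^ 2 * r ^ 2) (b ^ 2 * K ^ 2) _ _ one one
  have M01 := L _ _ (a ^ 2) (b ^ 2 * r ^ 2) _ _ c5 d5
  have M02 := L _ _ (a ^ 2 * r) (-(b ^ 2 * r * K)) _ _ c1 d1
  have M12 := L _ _ (a ^ 2 * r) (-(b ^ 2 * r * K)) _ _ c2 d2
  have fin : ∀ (f g f' g' : ℕ → ℝ) (X Y : ℝ),
      ∑ k ∈ range m, f k + ∑ k ∈ range m, g k = X → X = Y → (∀ k, f' k = f k) →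
      (∀ k, g' k = g k) → ∑ k ∈ range m, f' k + ∑ k ∈ range m, g' k = Y := by
    intro f g f' g' X Y h hXY hf hg
    rw [← hXY, ← h, sum_congr rfl fun k _ => hf k, sum_congr rfl fun k _ => hg k]
  fin_cases p <;> fin_cases q
  · refine fin _ _ _ _ _ _ M00 ?_ ?_ ?_ <;> intros <;> simp <;> linarith
  · refine fin _ _ _ _ _ _ M01 ?_ ?_ ?_ <;> intros <;> simp <;> ring
  · refine fin _ _ _ _ _ _ M02 ?_ ?_ ?_ <;> intros <;> simp <;> ring
  · refine fin _ _ _ _ _ _ M01 ?_ ?_ ?_ <;> intros <;> simp <;> ring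
  · refine fin _ _ _ _ _ _ M11 ?_ ?_ ?_ <;> intros <;> simp <;> linarith
  · refine fin _ _ _ _ _ _ M12 ?_ ?_ ?_ <;> intros <;> simp <;> ring
  · refine fin _ _ _ _ _ _ M02 ?_ ?_ ?_ <;> intros <;> simp <;> ring
  · refine fin _ _ _ _ _ _ M12 ?_ ?_ ?_ <;> intros <;> simp <;> ring
  · refine fin _ _ _ _ _ _ M22 ?_ ?_ ?_ <;> intros <;> simp <;> linarith

/-! ### The two cases of the theorem -/

lemma qNum_compl_cycle_four : qNum ((SimpleGraph.cycleGraph 4)ᶜ) = 2 := by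
  have adj : ∀ i j : Fin 4, (SimpleGraph.cycleGraph 4)ᶜ.Adj i j ↔
      i ≠ j ∧ (i : ℕ) % 2 = (j : ℕ) % 2 := by
    intro i j
    rw [SimpleGraph.compl_adj, cycleGraph_adj_val le_rfl]
    have := i.2
    have := j.2
    refine and_congr_right fun h => ?_
    have h' : (i : ℕ) ≠ j := fun e => h (Fin.ext e)
    omega
  refine qNum_eq_two_of_idem (i := 0) (j := 2) ((adj _ _).2 (by simp))
    (A := Matrix.of fun i j => if (i : ℕ) % 2 = (j : ℕ) % 2 then 1 / 2 else 0) ⟨?_, ?_⟩ ?_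
  · ext i j
    simp [eq_comm]
  · intro i j hij
    rw [adj]
    simp [hij]
  · ext i j
    fin_cases i <;> fin_cases j <;> norm_num [Matrix.mul_apply, Fin.sum_univ_four]

open Real in
/-- A scale `r` for which no two even frame vectors are orthogonal: only finitely many values of
`r²` are excluded. -/
lemma exists_scale (n : ℕ) : ∃ r : ℝ, 0 < r ∧ r < 1 / 2 ∧
    ∀ i j : Fin n, cos (2 * π * i / n - 2 * π * j / n) + r ^ 2 ≠ 0 := by
  have hS : (Set.range fun p : Fin n × Fin n =>
      √(-cos (2 * π * p.1 / n - 2 * π * p.2 / n))).Finite := Set.finite_range _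
  obtain ⟨r, hr, hrS⟩ := (Set.Ioo_infinite (show (0 : ℝ) < 1 / 2 by norm_num)).exists_notMem_finite hS
  refine ⟨r, hr.1, hr.2, fun i j h => hrS ⟨(i, j), ?_⟩⟩
  have e : -cos (2 * π * i / n - 2 * π * j / n) = r ^ 2 := by linarith
  simp only [e]
  exact sqrt_sq hr.1.le

open Real in
lemma qNum_compl_cycle_even (m : ℕ) (hm : 3 ≤ m) :
    qNum ((SimpleGraph.cycleGraph (2 * m))ᶜ) = 2 := by
  have hn : 4 ≤ 2 * m := by omega
  have hm3 : (3 : ℝ) ≤ m := by exact_mod_cast hm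
  have hm0 : (0 : ℝ) < m := by linarith
  obtain ⟨r, hr0, hr1, hr⟩ := exists_scale (2 * m)
  obtain ⟨K, hKdef⟩ : ∃ K, K = cos (2 * π / (2 * m : ℕ)) := ⟨_, rfl⟩
  have hK : 1 / 2 ≤ K := by
    rw [hKdef, ← cos_pi_div_three]
    have hpi := pi_pos
    have e : 2 * π / ((2 * m : ℕ) : ℝ) = π / m := by push_cast; field_simp
    rw [e]
    apply cos_le_cos_of_nonneg_of_le_pi (by positivity) (by linarith)
    gcongr
  have hr2 : r ^ 2 < 1 / 4 := by nlinarith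
  have hK2 : 1 / 4 ≤ K ^ 2 := by nlinarith
  obtain ⟨D, hD, hKD⟩ : ∃ D : ℝ, 0 < D ∧ K ^ 2 = D + r ^ 2 * r ^ 2 :=
    ⟨K ^ 2 - r ^ 2 * r ^ 2, by nlinarith, by ring⟩
  -- The squared weights solve the linear system that makes the frame Parseval.
  obtain ⟨a, ha0, ha⟩ : ∃ a : ℝ, 0 < a ∧
      a ^ 2 = (2 * K ^ 2 - r ^ 2) / (m * D) := by
    have : 0 < (2 * K ^ 2 - r ^ 2) / (m * D) :=
      div_pos (by linarith) (by positivity)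
    exact ⟨√_, sqrt_pos.2 this, sq_sqrt this.le⟩
  obtain ⟨b, hb0, hb⟩ : ∃ b : ℝ, 0 < b ∧
      b ^ 2 = (1 - 2 * r ^ 2) / (m * D) := by
    have : 0 < (1 - 2 * r ^ 2) / (m * D) :=
      div_pos (by linarith) (by positivity)
    exact ⟨√_, sqrt_pos.2 this, sq_sqrt this.le⟩
  have h1 : m * (a ^ 2 + b ^ 2 * r ^ 2) = 2 := by
    rw [ha, hb, hKD]; field_simp; ring
  have h2 : m * (a ^ 2 * r ^ 2 + b ^ 2 * K ^ 2) = 1 := by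
    rw [ha, hb, hKD]; field_simp; ring
  have hpars := frame_parseval m hm a b r K h1 h2
  let V : Matrix (Fin (2 * m)) (Fin 3) ℝ := Matrix.of fun i => frameVec (2 * m) a b r K i
  have hV : Vᵀ * V = 1 := by
    ext p q
    rw [Matrix.mul_apply, Matrix.one_apply, ← hpars p q,
      ← Fin.sum_univ_eq_sum_range (fun i => frameVec (2 * m) a b r K i p *
        frameVec (2 * m) a b r K i q)]
    rfl
  have adj02 : (SimpleGraph.cycleGraph (2 * m))ᶜ.Adj ⟨0, by omega⟩ ⟨2, by omega⟩ := by
    rw [SimpleGraph.compl_adj, cycleGraph_adj_val hn]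
    refine ⟨by simp, ?_⟩
    dsimp only
    omega
  refine qNum_eq_two_of_idem adj02 (A := V * Vᵀ) ⟨?_, ?_⟩ ?_
  · rw [Matrix.IsSymm, Matrix.transpose_mul, Matrix.transpose_transpose]
  · intro i j hij
    have hij' : (i : ℕ) ≠ j := fun e => hij (Fin.ext e)
    have hcos := cos_eq_iff_consecutive hn i j
    have hS := hr i j
    have hlow := neg_one_le_cos (2 * π * i / (2 * m : ℕ) - 2 * π * j / (2 * m : ℕ))
    rw [← hKdef] at hcos
    rw [SimpleGraph.compl_adj, cycleGraph_adj_val hn, ← hcos]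
    rw [cos_sub] at hcos hS hlow ⊢
    have hE : (V * Vᵀ) i j = frameVec (2 * m) a b r K i 0 * frameVec (2 * m) a b r K j 0 +
        frameVec (2 * m) a b r K i 1 * frameVec (2 * m) a b r K j 1 +
        frameVec (2 * m) a b r K i 2 * frameVec (2 * m) a b r K j 2 := by
      rw [Matrix.mul_apply, Fin.sum_univ_three]; rfl
    rw [hE]
    unfold frameVec
    generalize cos (2 * π * i / (2 * m : ℕ)) = ci at *
    generalize cos (2 * π * j / (2 * m : ℕ)) = cj at *
    generalize sin (2 * π * i / (2 * m : ℕ)) = si at *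
    generalize sin (2 * π * j / (2 * m : ℕ)) = sj at *
    -- Consecutive indices have opposite parity, because the length of the cycle is even.
    have hX : (i : ℕ) % 2 = (j : ℕ) % 2 → ¬ (ci * cj + si * sj = K) := by
      rw [hcos]; omega
    have key : ∀ c : ℝ, 0 < c → (c * (K - (ci * cj + si * sj)) ≠ 0 ↔
        i ≠ j ∧ ¬ (ci * cj + si * sj = K)) := by
      intro c hc
      simp only [ne_eq, mul_eq_zero, hc.ne', false_or, hij, not_false_eq_true, true_and, sub_eq_zero,
        eq_comm (a := K)]
    by_cases hi : (i : ℕ) % 2 = 0 <;> by_cases hj : (j : ℕ) % 2 = 0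
    · refine iff_of_true ?_ ⟨hij, hX (by omega)⟩
      have := mul_ne_zero (pow_pos ha0 2).ne' hS
      simp only [hi, hj, if_true]
      convert this using 1
      simp; ring
    · rw [← key (a * b * r) (by positivity)]
      simp only [hi, hj, if_true, if_false]
      apply not_congr
      apply Eq.congr_left
      simp; ring
    · rw [← key (a * b * r) (by positivity)]
      simp only [hi, hj, if_true, if_false]
      apply not_congr
      apply Eq.congr_left
      simp; ring
    · refine iff_of_true ?_ ⟨hij, hX (by omega)⟩
      have : 0 < b ^ 2 * (r ^ 2 * (ci * cj + si * sj) + K ^ 2) := by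
        apply mul_pos (by positivity)
        nlinarith [sq_nonneg r]
      simp only [hi, hj, if_false]
      convert this.ne' using 1
      simp; ring
  · rw [Matrix.mul_assoc, ← Matrix.mul_assoc Vᵀ, hV, Matrix.one_mul]

theorem stmt_19 (n : ℕ) (hn : 4 ≤ n) (he : Even n) :
    qNum ((SimpleGraph.cycleGraph n)ᶜ) = 2 := by
  obtain ⟨m, rfl⟩ := he.exists_two_nsmul
  rw [smul_eq_mul] at hn ⊢
  rcases eq_or_lt_of_le (show 2 ≤ m by omega) with rfl | h
  · exact qNum_compl_cycle_four
  · exact qNum_compl_cycle_even m h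
end
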